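/- Wigner–Eckart theorem for sl(2,ℝ): let ρ_j and ρ_{j'} be standard-basis representations with labels j, j' and weight sets M_j, M_{j'}, let T be a tensor operator of rank γ from V_j to V_{j'}, and suppose there exists Clebsch–Gordan data for the coupling F_γ ⊗ ρ_j such that the values J(J+1), J ∈ D(γ,j), are pairwise distinct, J(J+1) ≠ j'(j'+1) for every J ∈ D(γ,j) with J ≠ j', and M_J = M_{j'} when J = j' ∈ D(γ,j). Then there exists a constant c ∈ ℂ (the reduced matrix element) such that for all μ ∈ {−γ, …, γ}, m ∈ M_j and m' ∈ M_{j'}, the coefficient of |j',m'⟩ in the basis expansion of T_μ|j,m⟩ equals c · B(j',m'|γ,μ;j,m), where B(j',m'|γ,μ;j,m) := 0 if j' ∉ D(γ,j). In particular, if j' ∉ D(γ,j) then T_μ = 0 for all μ. -/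

import Mathlib

/-!
Standard-basis representations of sl(2,ℝ), tensor operators, and Clebsch–Gordan data.

A standard-basis representation with label j and weight set S ⊆ ℂ is modelled on the space
`↥S →₀ ℂ`, with basis vector `single ⟨m,hm⟩ 1` representing |j,m⟩. Tensor operators of rank
γ = G/2 are indexed by z : ℤ (with μ = z - γ for z ∈ {0,...,G}), vanishing out of range.
-/

noncomputable section

/-- Principal branch of the complex square root. -/
def csqrt (z : ℂ) : ℂ := z ^ ((1 : ℂ) / 2)

/-- C₊(j,m) = i √(j-m) √(j+m+1). -/
def Cp (j m : ℂ) : ℂ := Complex.I * csqrt (j - m) * csqrt (j + m + 1)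

/-- C₋(j,m) = i √(j+m) √(j-m+1). -/
def Cm (j m : ℂ) : ℂ := Complex.I * csqrt (j + m) * csqrt (j - m + 1)

/-- `S` is a standard weight set for the label `j`: finite-dimensional, positive discrete,
negative discrete, or continuous class. -/
def IsStdWeightSet (j : ℂ) (S : Set ℂ) : Prop :=
  (∃ n : ℕ, 2 * j = (n : ℂ) ∧ S = {m : ℂ | ∃ z : ℕ, z ≤ n ∧ m = -j + (z : ℂ)}) ∨
  (∃ n : ℕ, 2 * j = (n : ℂ) - 1 ∧ S = {m : ℂ | ∃ z : ℕ, m = j + 1 + (z : ℂ)}) ∨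
  (∃ n : ℕ, 2 * j = (n : ℂ) - 1 ∧ S = {m : ℂ | ∃ z : ℕ, m = -j - 1 - (z : ℂ)}) ∨
  (∃ ε : ℂ, (ε = 0 ∨ ε = 1 / 2) ∧ S = {m : ℂ | ∃ z : ℤ, m = ε + (z : ℂ)} ∧
    ((∃ n : ℤ, 2 * j = (n : ℂ)) → ¬ ∃ n : ℤ, j - ε = (n : ℂ)))

/-- The representation space V_j attached to a weight set S. -/
abbrev RepSp (S : Set ℂ) := ↥S →₀ ℂ

/-- The basis vector |j,m⟩ scaled by c, with m ∉ S giving 0. -/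
def bvec (S : Set ℂ) (m : ℂ) (c : ℂ) : RepSp S :=
  haveI := Classical.dec (m ∈ S)
  if h : m ∈ S then Finsupp.single (⟨m, h⟩ : ↥S) c else 0

/-- J₀ |j,m⟩ = m |j,m⟩. -/
def repJ0 (S : Set ℂ) : RepSp S →ₗ[ℂ] RepSp S :=
  Finsupp.lsum ℂ fun m => LinearMap.toSpanSingleton ℂ (RepSp S)
    (Finsupp.single m (m : ℂ))

/-- J₊ |j,m⟩ = C₊(j,m) |j,m+1⟩ (zero if m+1 ∉ S). -/
def repJp (j : ℂ) (S : Set ℂ) : RepSp S →ₗ[ℂ] RepSp S :=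
  Finsupp.lsum ℂ fun m => LinearMap.toSpanSingleton ℂ (RepSp S)
    (bvec S ((m : ℂ) + 1) (Cp j (m : ℂ)))

/-- J₋ |j,m⟩ = C₋(j,m) |j,m-1⟩ (zero if m-1 ∉ S). -/
def repJm (j : ℂ) (S : Set ℂ) : RepSp S →ₗ[ℂ] RepSp S :=
  Finsupp.lsum ℂ fun m => LinearMap.toSpanSingleton ℂ (RepSp S)
    (bvec S ((m : ℂ) - 1) (Cm j (m : ℂ)))

/-- A tensor operator of rank γ = G/2 from the representation (j,S) to (j',S'):
a family T : ℤ → linear maps, T z being the component of index μ = z - γ, vanishing for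
z ∉ {0,...,G}, satisfying [J₀,T_μ] = μ T_μ and [J_±,T_μ] = C_±(γ,μ) T_{μ±1}. -/
def IsTensorOp (G : ℕ) (j j' : ℂ) (S S' : Set ℂ)
    (T : ℤ → (RepSp S →ₗ[ℂ] RepSp S')) : Prop :=
  (∀ z : ℤ, (z < 0 ∨ (G : ℤ) < z) → T z = 0) ∧
  (∀ z : ℤ, repJ0 S' ∘ₗ T z - T z ∘ₗ repJ0 S = ((z : ℂ) - (G : ℂ) / 2) • T z) ∧
  (∀ z : ℤ, repJp j' S' ∘ₗ T z - T z ∘ₗ repJp j S =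
    Cp ((G : ℂ) / 2) ((z : ℂ) - (G : ℂ) / 2) • T (z + 1)) ∧
  (∀ z : ℤ, repJm j' S' ∘ₗ T z - T z ∘ₗ repJm j S =
    Cm ((G : ℂ) / 2) ((z : ℂ) - (G : ℂ) / 2) • T (z - 1))

/-- The label J = j + ν - γ of the ν-th summand in the decomposition of F_γ ⊗ ρ_j. -/
def jlab (G : ℕ) (j : ℂ) (ν : Fin (G + 1)) : ℂ := j + ((ν : ℕ) : ℂ) - (G : ℂ) / 2

/-- μ = z - γ. -/
def mucz (G : ℕ) (z : ℤ) : ℂ := (z : ℂ) - (G : ℂ) / 2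

/-!
Contracting `T_μ|j,m⟩` with the coefficients `A(γ,μ;j,m|J,M)` produces vectors of `V_{j'}` that
transform under `J_±` like `|J,M⟩`. Let `t_J(M)` be the coefficient of `|j',M⟩` in the `M`-th of
them. Then `C_±(J,M) t_J(M±1) = C_±(j',M) t_J(M)`. Going up and down again compares Casimir values,
`J(J+1) t_J(M) = j'(j'+1) t_J(M)`, so only `J = j'` contributes, and for `J = j'` the relation says
that `t_J` does not change along any step with `C₊(j',M) ≠ 0`, hence is a constant on `M_{j'}`: the
reduced matrix element. The orthogonality relations recover the matrix elements of `T` as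
`∑_J B(J,M|γ,μ;j,m) t_J(M)`.
-/

/-! ### The ladder coefficients -/

lemma csqrt_mul_self (w : ℂ) : csqrt w * csqrt w = w := by
  simpa [csqrt, sq] using Complex.cpow_nat_inv_pow w two_ne_zero

lemma csqrt_eq_zero_iff {w : ℂ} : csqrt w = 0 ↔ w = 0 := by
  simp [csqrt, Complex.cpow_eq_zero_iff]

lemma Cm_eq_Cp_sub_one (j m : ℂ) : Cm j m = Cp j (m - 1) := by
  rw [Cm, Cp, show j - (m - 1) = j - m + 1 by ring, show j + (m - 1) + 1 = j + m by ring]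
  ring

lemma Cp_mul_self (j m : ℂ) : Cp j m * Cp j m = m * (m + 1) - j * (j + 1) := by
  calc Cp j m * Cp j m = (Complex.I * Complex.I) * (csqrt (j - m) * csqrt (j - m)) *
        (csqrt (j + m + 1) * csqrt (j + m + 1)) := by rw [Cp]; ring
    _ = -1 * (j - m) * (j + m + 1) := by simp only [csqrt_mul_self, Complex.I_mul_I]
    _ = m * (m + 1) - j * (j + 1) := by ring

lemma Cp_eq_zero_iff {j m : ℂ} : Cp j m = 0 ↔ m = j ∨ m = -j - 1 := by
  simp only [Cp, mul_eq_zero, Complex.I_ne_zero, false_or, csqrt_eq_zero_iff]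
  exact or_congr ⟨fun h => by linear_combination -h, fun h => by rw [h]; ring⟩
    ⟨fun h => by linear_combination h, fun h => by rw [h]; ring⟩

lemma Cp_add_intCast_eq_zero_iff {j m₀ : ℂ} {a b : ℤ} (ha : j = m₀ + a) (hb : -j - 1 = m₀ + b)
    (z : ℤ) : Cp j (m₀ + z) = 0 ↔ z = a ∨ z = b := by
  rw [Cp_eq_zero_iff, hb, ha, add_right_inj, add_right_inj, Int.cast_inj, Int.cast_inj]

/-! ### Weight sets -/

/-- No step `m ↦ m + d` with non-zero coefficient `c m` enters or leaves `S`. For `d = 1` and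
`c = C₊(j,·)` this is what makes the span of the `|j,m⟩`, `m ∈ S`, a representation. -/
def IsShiftStable (S : Set ℂ) (d : ℂ) (c : ℂ → ℂ) : Prop :=
  ∀ m, c m ≠ 0 → (m ∈ S ↔ m + d ∈ S)

/-- `J₊` and `J₋` move between the neighbouring weights `m` and `m' = m + 1`. -/
def WeightLink (j m m' : ℂ) : Prop := m' = m + 1 ∧ Cp j m ≠ 0

/-- Any two weights in `S` are joined by a chain of links: the irreducibility of the
representation with label `j` and weight set `S`. -/
def IsLinked (j : ℂ) (S : Set ℂ) : Prop :=
  ∀ m ∈ S, ∀ m' ∈ S, Relation.EqvGen (WeightLink j) m m'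

/-- `I` is an interval of integers such that `C₊(j,·)` vanishes where a unit step enters or leaves
`m₀ + I`, but not inside `m₀ + I`. This is the common shape of the four standard classes. -/
structure IsWeightString (j m₀ : ℂ) (I : Set ℤ) : Prop where
  ordConnected : I.OrdConnected
  ne_zero : ∀ z : ℤ, z ∈ I → z + 1 ∈ I → Cp j (m₀ + z) ≠ 0
  stable : ∀ z : ℤ, Cp j (m₀ + z) ≠ 0 → (z ∈ I ↔ z + 1 ∈ I)

lemma IsShiftStable.isShiftStable_Cm {j : ℂ} {S : Set ℂ} (hS : IsShiftStable S 1 (Cp j)) :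
    IsShiftStable S (-1) (Cm j) := fun m hm => by
  have h := hS (m - 1) (Cm_eq_Cp_sub_one j m ▸ hm)
  rw [sub_add_cancel] at h
  exact h.symm

namespace IsWeightString

variable {j m₀ : ℂ} {I : Set ℤ}

lemma isShiftStable (h : IsWeightString j m₀ I) :
    IsShiftStable ((fun z : ℤ => m₀ + z) '' I) 1 (Cp j) := by
  intro m hm
  constructor
  · rintro ⟨z, hz, rfl⟩
    exact ⟨z + 1, (h.stable z hm).mp hz, by push_cast; ring⟩
  · rintro ⟨z, hz, hzm⟩
    obtain rfl : m = m₀ + ((z - 1 : ℤ) : ℂ) := by push_cast; linear_combination -hzm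
    exact ⟨z - 1, (h.stable _ hm).mpr (by simpa using hz), rfl⟩

lemma eqvGen_of_le (h : IsWeightString j m₀ I) {z w : ℤ} (hz : z ∈ I) (hzw : z ≤ w) (hw : w ∈ I) :
    Relation.EqvGen (WeightLink j) (m₀ + z) (m₀ + w) := by
  induction w, hzw using Int.leInduction with
  | base => exact .refl _
  | succ w hzw ih =>
    have hwI : w ∈ I := h.ordConnected.out hz hw ⟨hzw, by omega⟩
    exact (ih hwI).trans _ _ _ (.rel _ _ ⟨by push_cast; ring, h.ne_zero w hwI hw⟩)

lemma isLinked (h : IsWeightString j m₀ I) : IsLinked j ((fun z : ℤ => m₀ + z) '' I) := by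
  rintro _ ⟨z, hz, rfl⟩ _ ⟨w, hw, rfl⟩
  rcases le_total z w with hzw | hwz
  · exact h.eqvGen_of_le hz hzw hw
  · exact (h.eqvGen_of_le hw hwz hz).symm

lemma of_finite {n : ℕ} (hn : 2 * j = n) : IsWeightString j (-j) (Set.Icc 0 (n : ℤ)) := by
  have hzero := Cp_add_intCast_eq_zero_iff (j := j) (m₀ := -j) (a := n) (b := -1)
    (by push_cast; linear_combination hn) (by push_cast; ring)
  refine ⟨Set.ordConnected_Icc, ?_, ?_⟩ <;>
  · intro z
    simp only [ne_eq, hzero, Set.mem_Icc]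
    omega

lemma of_positive_discrete {n : ℕ} (hn : 2 * j = n - 1) :
    IsWeightString j (j + 1) (Set.Ici 0) := by
  have hzero := Cp_add_intCast_eq_zero_iff (j := j) (m₀ := j + 1) (a := -1) (b := -n - 1)
    (by push_cast; ring) (by push_cast; linear_combination -hn)
  refine ⟨Set.ordConnected_Ici, ?_, ?_⟩ <;>
  · intro z
    simp only [ne_eq, hzero, Set.mem_Ici]
    omega

lemma of_negative_discrete {n : ℕ} (hn : 2 * j = n - 1) :
    IsWeightString j (-j - 1) (Set.Iic 0) := by
  have hzero := Cp_add_intCast_eq_zero_iff (j := j) (m₀ := -j - 1) (a := n) (b := 0)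
    (by push_cast; linear_combination hn) (by push_cast; ring)
  refine ⟨Set.ordConnected_Iic, ?_, ?_⟩ <;>
  · intro z
    simp only [ne_eq, hzero, Set.mem_Iic]
    omega

lemma of_continuous {ε : ℂ} (hε : ε = 0 ∨ ε = 1 / 2)
    (hj : (∃ n : ℤ, 2 * j = n) → ¬ ∃ n : ℤ, j - ε = n) : IsWeightString j ε Set.univ := by
  obtain ⟨e, he⟩ : ∃ e : ℤ, 2 * ε = e := by
    rcases hε with rfl | rfl
    exacts [⟨0, by simp⟩, ⟨1, by simp⟩]
  have hint (k : ℤ) : j - ε ≠ k := fun hk =>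
    hj ⟨2 * k + e, by push_cast; linear_combination 2 * hk + he⟩ ⟨k, hk⟩
  have hne (z : ℤ) : Cp j (ε + z) ≠ 0 := by
    rw [Ne, Cp_eq_zero_iff]
    rintro (h | h)
    · exact hint z (by linear_combination -h)
    · exact hint (-z - 1 - e) (by push_cast; linear_combination h - he)
  exact ⟨Set.ordConnected_univ, fun z _ _ => hne z, fun z _ => by simp⟩

end IsWeightString

namespace IsStdWeightSet

variable {j : ℂ} {S : Set ℂ}

lemma exists_isWeightString (hS : IsStdWeightSet j S) :
    ∃ (m₀ : ℂ) (I : Set ℤ), IsWeightString j m₀ I ∧ S = (fun z : ℤ => m₀ + z) '' I := by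
  rcases hS with ⟨n, hn, rfl⟩ | ⟨n, hn, rfl⟩ | ⟨n, hn, rfl⟩ | ⟨ε, hε, rfl, hj⟩
  · refine ⟨_, _, .of_finite hn, Set.Subset.antisymm ?_ ?_⟩
    · rintro _ ⟨z, hz, rfl⟩
      exact ⟨z, ⟨by omega, by omega⟩, by simp⟩
    · rintro _ ⟨z, ⟨hz, hzn⟩, rfl⟩
      lift z to ℕ using hz
      exact ⟨z, by omega, by simp⟩
  · refine ⟨_, _, .of_positive_discrete hn, Set.Subset.antisymm ?_ ?_⟩
    · rintro _ ⟨z, rfl⟩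
      exact ⟨z, Int.natCast_nonneg z, by simp⟩
    · rintro _ ⟨z, hz, rfl⟩
      lift z to ℕ using hz
      exact ⟨z, by simp⟩
  · refine ⟨_, _, .of_negative_discrete hn, Set.Subset.antisymm ?_ ?_⟩
    · rintro _ ⟨z, rfl⟩
      exact ⟨-z, by simp, by push_cast; ring⟩
    · rintro _ ⟨z, hz, rfl⟩
      obtain ⟨n, rfl⟩ := Int.exists_eq_neg_ofNat hz
      exact ⟨n, by push_cast; ring⟩
  · refine ⟨_, _, .of_continuous hε hj, ?_⟩
    ext m
    simp [eq_comm]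

lemma isShiftStable (hS : IsStdWeightSet j S) : IsShiftStable S 1 (Cp j) := by
  obtain ⟨m₀, I, hI, rfl⟩ := hS.exists_isWeightString
  exact hI.isShiftStable

lemma isLinked (hS : IsStdWeightSet j S) : IsLinked j S := by
  obtain ⟨m₀, I, hI, rfl⟩ := hS.exists_isWeightString
  exact hI.isLinked

end IsStdWeightSet

lemma IsLinked.exists_const {j : ℂ} {S : Set ℂ} (hS : IsLinked j S) {α : Type*} [Nonempty α]
    {f : ℂ → α} (hf : ∀ m, Cp j m ≠ 0 → f (m + 1) = f m) : ∃ c, ∀ m ∈ S, f m = c := by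
  have hconst {m m' : ℂ} (h : Relation.EqvGen (WeightLink j) m m') : f m = f m' := by
    induction h with
    | rel m m' h => rw [h.1, hf m h.2]
    | refl m => rfl
    | symm m m' _ ih => exact ih.symm
    | trans m m' m'' _ _ ih ih' => exact ih.trans ih'
  rcases S.eq_empty_or_nonempty with rfl | ⟨m₀, hm₀⟩
  · exact ⟨Classical.arbitrary α, by simp⟩
  · exact ⟨f m₀, fun m hm => hconst (hS m hm m₀ hm₀)⟩

/-! ### Weighted shifts and matrix elements -/

section MatrixElements

variable {S S' : Set ℂ}

/-- The functional reading off the coefficient of `|j,M⟩`; it is `0` when `M` is not a weight. -/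
def weightCoord (S : Set ℂ) (M : ℂ) : RepSp S →ₗ[ℂ] ℂ :=
  haveI := Classical.dec (M ∈ S)
  if h : M ∈ S then Finsupp.lapply ⟨M, h⟩ else 0

/-- The operator `|j,m⟩ ↦ c(m) |j,m+d⟩`, of which `J₀`, `J₊` and `J₋` are instances. -/
def weightShift (S : Set ℂ) (d : ℂ) (c : ℂ → ℂ) : RepSp S →ₗ[ℂ] RepSp S :=
  Finsupp.lsum ℂ fun m => LinearMap.toSpanSingleton ℂ (RepSp S) (bvec S (m + d) (c m))

/-- The matrix element `⟨j',M|L|j,m⟩`, read as `0` when `m` or `M` is not a weight. -/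
def matrixElem (L : RepSp S →ₗ[ℂ] RepSp S') (m M : ℂ) : ℂ := weightCoord S' M (L (bvec S m 1))

lemma repJ0_eq_weightShift : repJ0 S = weightShift S 0 id := by
  simp [repJ0, weightShift, bvec]

lemma repJp_eq_weightShift (j : ℂ) : repJp j S = weightShift S 1 (Cp j) := rfl

lemma repJm_eq_weightShift (j : ℂ) : repJm j S = weightShift S (-1) (Cm j) := rfl

lemma bvec_of_mem {m : ℂ} (hm : m ∈ S) (x : ℂ) : bvec S m x = Finsupp.single ⟨m, hm⟩ x := by
  simp [bvec, hm]

lemma bvec_of_notMem {m : ℂ} (hm : m ∉ S) (x : ℂ) : bvec S m x = 0 := by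
  simp [bvec, hm]

lemma bvec_eq_smul (m x : ℂ) : bvec S m x = x • bvec S m 1 := by
  by_cases hm : m ∈ S <;> simp [bvec, hm]

lemma weightCoord_of_mem {M : ℂ} (hM : M ∈ S) (v : RepSp S) :
    weightCoord S M v = v ⟨M, hM⟩ := by
  simp [weightCoord, hM]

lemma weightCoord_bvec_self {m : ℂ} (hm : m ∈ S) (x : ℂ) : weightCoord S m (bvec S m x) = x := by
  simp [weightCoord_of_mem hm, bvec_of_mem hm]

lemma weightCoord_bvec_of_ne {m M : ℂ} (h : M ≠ m) (x : ℂ) :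
    weightCoord S M (bvec S m x) = 0 := by
  by_cases hm : m ∈ S <;> by_cases hM : M ∈ S <;> simp [weightCoord, bvec, hm, hM, h.symm]

lemma weightShift_bvec {d : ℂ} {c : ℂ → ℂ} (hc : IsShiftStable S d c) (m : ℂ) :
    weightShift S d c (bvec S m 1) = c m • bvec S (m + d) 1 := by
  by_cases hm : m ∈ S
  · simp [weightShift, bvec_of_mem hm, ← bvec_eq_smul]
  · by_cases hcm : c m = 0
    · simp [bvec_of_notMem hm, hcm]
    · simp [bvec_of_notMem hm, bvec_of_notMem (mt (hc m hcm).mpr hm)]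

lemma weightCoord_weightShift {d : ℂ} {c : ℂ → ℂ} (hc : IsShiftStable S d c) (M : ℂ)
    (v : RepSp S) : weightCoord S (M + d) (weightShift S d c v) = c M * weightCoord S M v := by
  suffices weightCoord S (M + d) ∘ₗ weightShift S d c = c M • weightCoord S M from
    LinearMap.congr_fun this v
  ext m
  have hm : Finsupp.single m 1 = bvec S m 1 := (bvec_of_mem m.2 1).symm
  simp only [LinearMap.comp_apply, Finsupp.lsingle_apply, LinearMap.smul_apply, smul_eq_mul, hm,
    weightShift_bvec hc, map_smul]
  by_cases hM : M = m
  · subst hM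
    by_cases hcm : c m = 0
    · simp [hcm]
    · rw [weightCoord_bvec_self ((hc m hcm).mp m.2), weightCoord_bvec_self m.2]
  · rw [weightCoord_bvec_of_ne hM, weightCoord_bvec_of_ne (by simpa using hM), mul_zero, mul_zero]

lemma matrixElem_of_mem (L : RepSp S →ₗ[ℂ] RepSp S') {m M : ℂ} (hm : m ∈ S) (hM : M ∈ S') :
    matrixElem L m M = L (Finsupp.single ⟨m, hm⟩ 1) ⟨M, hM⟩ := by
  rw [matrixElem, weightCoord_of_mem hM, bvec_of_mem hm]

lemma matrixElem_of_notMem (L : RepSp S →ₗ[ℂ] RepSp S') {m : ℂ} (hm : m ∉ S) (M : ℂ) :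
    matrixElem L m M = 0 := by
  simp [matrixElem, bvec_of_notMem hm]

lemma matrixElem_zero (m M : ℂ) : matrixElem (0 : RepSp S →ₗ[ℂ] RepSp S') m M = 0 := by
  simp [matrixElem]

lemma eq_zero_of_matrixElem_eq_zero {L : RepSp S →ₗ[ℂ] RepSp S'}
    (h : ∀ m ∈ S, ∀ M ∈ S', matrixElem L m M = 0) : L = 0 := by
  ext m M
  simpa [matrixElem_of_mem L m.2 M.2] using h m m.2 M M.2

lemma matrixElem_of_commutator {d : ℂ} {c c' : ℂ → ℂ} (hc : IsShiftStable S d c)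
    (hc' : IsShiftStable S' d c') {L L' : RepSp S →ₗ[ℂ] RepSp S'} {g : ℂ}
    (h : weightShift S' d c' ∘ₗ L - L ∘ₗ weightShift S d c = g • L') (m M : ℂ) :
    c' M * matrixElem L m M =
      g * matrixElem L' m (M + d) + c m * matrixElem L (m + d) (M + d) := by
  have hm := congrArg (weightCoord S' (M + d)) (LinearMap.congr_fun h (bvec S m 1))
  simp only [LinearMap.sub_apply, LinearMap.comp_apply, LinearMap.smul_apply, map_sub, map_smul,
    weightCoord_weightShift hc', weightShift_bvec hc, smul_eq_mul] at hm
  exact sub_eq_iff_eq_add.mp hm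

end MatrixElements

namespace IsTensorOp

variable {G : ℕ} {j j' : ℂ} {S S' : Set ℂ} {T : ℤ → (RepSp S →ₗ[ℂ] RepSp S')}

lemma matrixElem_of_ne (hT : IsTensorOp G j j' S S' T) {z : ℤ} {m M : ℂ}
    (hM : M ≠ m + mucz G z) : matrixElem (T z) m M = 0 := by
  have hJ0 := hT.2.1 z
  rw [repJ0_eq_weightShift, repJ0_eq_weightShift] at hJ0
  have h := matrixElem_of_commutator (fun _ _ => by simp) (fun _ _ => by simp) hJ0 m M
  have hmul : (M - (m + mucz G z)) * matrixElem (T z) m M = 0 := by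
    simp only [id, add_zero] at h
    rw [mucz]
    linear_combination h
  exact (mul_eq_zero.mp hmul).resolve_left (sub_ne_zero.mpr hM)

lemma Cp_mul_matrixElem (hT : IsTensorOp G j j' S S' T) (hS : IsShiftStable S 1 (Cp j))
    (hS' : IsShiftStable S' 1 (Cp j')) (z : ℤ) (m M : ℂ) :
    Cp j' M * matrixElem (T z) m M = Cp (G / 2) (mucz G z) * matrixElem (T (z + 1)) m (M + 1) +
      Cp j m * matrixElem (T z) (m + 1) (M + 1) :=
  matrixElem_of_commutator hS hS'
    (by simpa only [repJp_eq_weightShift, mucz] using hT.2.2.1 z) m M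

lemma Cm_mul_matrixElem (hT : IsTensorOp G j j' S S' T) (hS : IsShiftStable S 1 (Cp j))
    (hS' : IsShiftStable S' 1 (Cp j')) (z : ℤ) (m M : ℂ) :
    Cm j' M * matrixElem (T z) m M = Cm (G / 2) (mucz G z) * matrixElem (T (z - 1)) m (M - 1) +
      Cm j m * matrixElem (T z) (m - 1) (M - 1) :=
  matrixElem_of_commutator hS.isShiftStable_Cm hS'.isShiftStable_Cm
    (by simpa only [repJm_eq_weightShift, mucz] using hT.2.2.2 z) m M

end IsTensorOp

/-! ### Recoupling -/

lemma sum_comp_sub_eq_sum {α M : Type*} [AddGroup α] [AddCommMonoid M] {I : Finset α} {s : α}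
    {f : α → M} (hf : ∀ z, f z ≠ 0 → z ∈ I ∧ z + s ∈ I) :
    ∑ z ∈ I, f (z - s) = ∑ z ∈ I, f z := by
  rw [← finsum_eq_sum_of_support_subset f fun z hz => (hf z hz).1,
    ← finsum_eq_sum_of_support_subset (fun z => f (z - s)) fun z hz => by
      simpa using (hf (z - s) hz).2]
  exact finsum_comp_equiv (Equiv.subRight s)

/-- The coefficient of `|j',M⟩` in `∑_μ a(μ,M-μ,M) T_μ|j,M-μ⟩`, with `μ = z - γ`; the weights `a`
are the coefficients `A(γ,μ;j,m|J,M)` for a fixed `J`. -/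
def reducedElem (G : ℕ) {S S' : Set ℂ} (T : ℤ → (RepSp S →ₗ[ℂ] RepSp S')) (a : ℤ → ℂ → ℂ → ℂ)
    (M : ℂ) : ℂ :=
  ∑ z ∈ Finset.Icc (0 : ℤ) G, a z (M - mucz G z) M * matrixElem (T z) (M - mucz G z) M

/-- Both relations contain a term with `g`, with `a (z - s)` in one and `T (z + s)` in the other:
their sums over `z` agree after a shift of the summation index by `s`. -/
lemma mul_reducedElem_add {G : ℕ} {S S' : Set ℂ} {T : ℤ → (RepSp S →ₗ[ℂ] RepSp S')}
    {a : ℤ → ℂ → ℂ → ℂ} {s : ℤ} {g : ℤ → ℂ} {c c' k : ℂ → ℂ}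
    (hT0 : ∀ z, (z < 0 ∨ (G : ℤ) < z) → T z = 0)
    (ha0 : ∀ z m M, (z < 0 ∨ (G : ℤ) < z) → a z m M = 0)
    (ha : ∀ z m M, k M * a z m (M + s) = g (z - s) * a (z - s) m M + c (m - s) * a z (m - s) M)
    (hT : ∀ z m M, c' M * matrixElem (T z) m M =
      g z * matrixElem (T (z + s)) m (M + s) + c m * matrixElem (T z) (m + s) (M + s)) (M : ℂ) :
    k M * reducedElem G T a (M + s) = c' M * reducedElem G T a M := by
  let rankTerm (z : ℤ) : ℂ :=
    g z * a z (M - mucz G z) M * matrixElem (T (z + s)) (M - mucz G z) (M + s)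
  have rankTerm_support (z : ℤ) (hz : rankTerm z ≠ 0) :
      z ∈ Finset.Icc 0 (G : ℤ) ∧ z + s ∈ Finset.Icc 0 (G : ℤ) := by
    simp only [Finset.mem_Icc]
    refine ⟨?_, ?_⟩ <;> by_contra hout <;> apply hz
    · simp [rankTerm, ha0 z _ _ (by omega)]
    · simp [rankTerm, hT0 (z + s) (by omega), matrixElem_zero]
  have hweight (z : ℤ) : M - mucz G (z - s) = M + s - mucz G z := by
    simp only [mucz, Int.cast_sub]
    ring
  have hweight' (z : ℤ) : M - mucz G z + s = M + s - mucz G z := by ring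
  let weightTerm (z : ℤ) : ℂ :=
    c (M - mucz G z) * a z (M - mucz G z) M * matrixElem (T z) (M - mucz G z + s) (M + s)
  calc k M * reducedElem G T a (M + s)
    _ = ∑ z ∈ Finset.Icc (0 : ℤ) G, (rankTerm (z - s) + weightTerm z) := by
        rw [reducedElem, Finset.mul_sum]
        refine Finset.sum_congr rfl fun z _ => ?_
        have hrec := ha z (M + s - mucz G z) M
        rw [show M + s - mucz G z - s = M - mucz G z by ring] at hrec
        simp only [rankTerm, weightTerm, hweight, hweight', sub_add_cancel]
        linear_combination matrixElem (T z) (M + s - mucz G z) (M + s) * hrec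
    _ = ∑ z ∈ Finset.Icc (0 : ℤ) G, (rankTerm z + weightTerm z) := by
        rw [Finset.sum_add_distrib, sum_comp_sub_eq_sum rankTerm_support, Finset.sum_add_distrib]
    _ = c' M * reducedElem G T a M := by
        rw [reducedElem, Finset.mul_sum]
        refine Finset.sum_congr rfl fun z _ => ?_
        linear_combination -a z (M - mucz G z) M * hT z (M - mucz G z) M

lemma eq_zero_of_casimir_ne {J j' : ℂ} {t : ℂ → ℂ} {M : ℂ}
    (hup : Cp J M * t (M + 1) = Cp j' M * t M) (hdown : Cp J M * t M = Cp j' M * t (M + 1))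
    (hJ : J * (J + 1) ≠ j' * (j' + 1)) : t M = 0 := by
  have hmul : (J * (J + 1) - j' * (j' + 1)) * t M = 0 := by
    linear_combination t M * Cp_mul_self J M - t M * Cp_mul_self j' M - Cp J M * hdown -
      Cp j' M * hup
  exact (mul_eq_zero.mp hmul).resolve_left (sub_ne_zero.mpr hJ)

/-- `A` and `B` couple `F_γ ⊗ ρ_j`, `γ = G/2`, to summands with labels `J ν`, `ν ∈ D`: `B` recovers
the product basis from its components along the summands, and the ladder operators act on the
combinations `∑ A(γ,μ;j,m|J,M) |γ,μ⟩ ⊗ |j,m⟩` with the coefficients `C_±(J,M)`. As in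
`IsTensorOp`, `μ = z - γ`; the arguments of `A` and `B` are `z`, `m`, `ν`, `M` in this order. -/
structure IsCoupling {ι : Type*} (G : ℕ) (j : ℂ) (S : Set ℂ) (D : Finset ι) (J : ι → ℂ)
    (A B : ℤ → ℂ → ι → ℂ → ℂ) : Prop where
  A_eq_zero : ∀ (z : ℤ) (m : ℂ) (ν : ι) (M : ℂ), (z < 0 ∨ (G : ℤ) < z) → A z m ν M = 0
  B_eq_zero : ∀ (z : ℤ) (m : ℂ) (ν : ι) (M : ℂ),
    (z < 0 ∨ (G : ℤ) < z ∨ M ≠ m + mucz G z) → B z m ν M = 0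
  orth_diag : ∀ (z : ℤ) (m : ℂ), 0 ≤ z → z ≤ (G : ℤ) → m ∈ S →
    (∑ ν ∈ D, A z m ν (m + mucz G z) * B z m ν (m + mucz G z)) = 1
  orth_off : ∀ (z z' : ℤ) (m m' : ℂ), 0 ≤ z → z ≤ (G : ℤ) → 0 ≤ z' → z' ≤ (G : ℤ) →
    m ∈ S → m' ∈ S → (z ≠ z' ∨ m ≠ m') →
    (∑ ν ∈ D, A z m ν (m + mucz G z) * B z' m' ν (m + mucz G z)) = 0
  rec_plus : ∀ ν ∈ D, ∀ (z : ℤ) (m M : ℂ), Cp (J ν) M * A z m ν (M + 1) =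
    Cp ((G : ℂ) / 2) (mucz G (z - 1)) * A (z - 1) m ν M + Cp j (m - 1) * A z (m - 1) ν M
  rec_minus : ∀ ν ∈ D, ∀ (z : ℤ) (m M : ℂ), Cm (J ν) M * A z m ν (M - 1) =
    Cm ((G : ℂ) / 2) (mucz G (z + 1)) * A (z + 1) m ν M + Cm j (m + 1) * A z (m + 1) ν M

namespace IsCoupling

variable {ι : Type*} {G : ℕ} {j j' : ℂ} {S S' : Set ℂ} {D : Finset ι} {J : ι → ℂ}
  {A B : ℤ → ℂ → ι → ℂ → ℂ} {T : ℤ → (RepSp S →ₗ[ℂ] RepSp S')} {ν : ι}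

lemma Cp_mul_reducedElem (h : IsCoupling G j S D J A B) (hS : IsShiftStable S 1 (Cp j))
    (hS' : IsShiftStable S' 1 (Cp j')) (hT : IsTensorOp G j j' S S' T) (hν : ν ∈ D) (M : ℂ) :
    Cp (J ν) M * reducedElem G T (A · · ν ·) (M + 1) =
      Cp j' M * reducedElem G T (A · · ν ·) M := by
  simpa using mul_reducedElem_add (s := 1) (c := Cp j) (g := fun z => Cp (G / 2) (mucz G z))
    hT.1 (h.A_eq_zero · · ν ·) (by simpa using h.rec_plus ν hν)
    (by simpa using hT.Cp_mul_matrixElem hS hS') M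

lemma Cm_mul_reducedElem (h : IsCoupling G j S D J A B) (hS : IsShiftStable S 1 (Cp j))
    (hS' : IsShiftStable S' 1 (Cp j')) (hT : IsTensorOp G j j' S S' T) (hν : ν ∈ D) (M : ℂ) :
    Cm (J ν) M * reducedElem G T (A · · ν ·) (M - 1) =
      Cm j' M * reducedElem G T (A · · ν ·) M := by
  simpa [← sub_eq_add_neg] using mul_reducedElem_add (s := -1) (c := Cm j)
    (g := fun z => Cm (G / 2) (mucz G z)) hT.1 (h.A_eq_zero · · ν ·)
    (by simpa [← sub_eq_add_neg] using h.rec_minus ν hν)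
    (by simpa [← sub_eq_add_neg] using hT.Cm_mul_matrixElem hS hS') M

lemma reducedElem_eq_zero (h : IsCoupling G j S D J A B) (hS : IsShiftStable S 1 (Cp j))
    (hS' : IsShiftStable S' 1 (Cp j')) (hT : IsTensorOp G j j' S S' T) (hν : ν ∈ D)
    (hcas : J ν * (J ν + 1) ≠ j' * (j' + 1)) (M : ℂ) : reducedElem G T (A · · ν ·) M = 0 := by
  refine eq_zero_of_casimir_ne (h.Cp_mul_reducedElem hS hS' hT hν M) ?_ hcas
  simpa [Cm_eq_Cp_sub_one] using h.Cm_mul_reducedElem hS hS' hT hν (M + 1)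

lemma exists_reducedElem_eq (h : IsCoupling G j S D J A B) (hS : IsShiftStable S 1 (Cp j))
    (hS' : IsShiftStable S' 1 (Cp j')) (hlink : IsLinked j' S') (hT : IsTensorOp G j j' S S' T)
    (hν : ν ∈ D) (hJ : J ν = j') : ∃ c, ∀ M ∈ S', reducedElem G T (A · · ν ·) M = c :=
  hlink.exists_const fun M hM =>
    mul_left_cancel₀ hM (hJ ▸ h.Cp_mul_reducedElem hS hS' hT hν M)

lemma matrixElem_eq_sum_of_weight (h : IsCoupling G j S D J A B) {z : ℤ} (hz : 0 ≤ z)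
    (hzG : z ≤ G) {m M : ℂ} (hm : m ∈ S) (hM : M = m + mucz G z) :
    matrixElem (T z) m M = ∑ ν ∈ D, B z m ν M * reducedElem G T (A · · ν ·) M := by
  have hswap : ∑ ν ∈ D, B z m ν M * reducedElem G T (A · · ν ·) M =
      ∑ w ∈ Finset.Icc (0 : ℤ) G, (∑ ν ∈ D, A w (M - mucz G w) ν M * B z m ν M) *
        matrixElem (T w) (M - mucz G w) M := by
    simp only [reducedElem, Finset.mul_sum, Finset.sum_mul]
    rw [Finset.sum_comm]
    exact Finset.sum_congr rfl fun w _ => Finset.sum_congr rfl fun ν _ => by ring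
  rw [hswap, Finset.sum_eq_single_of_mem z (Finset.mem_Icc.mpr ⟨hz, hzG⟩)]
  · rw [show M - mucz G z = m by rw [hM]; ring, hM, h.orth_diag z m hz hzG hm, one_mul]
  · intro w hw hwz
    obtain ⟨hw0, hwG⟩ := Finset.mem_Icc.mp hw
    by_cases hwS : M - mucz G w ∈ S
    · have horth := h.orth_off w z _ m hw0 hwG hz hzG hwS hm (Or.inl hwz)
      rw [sub_add_cancel] at horth
      rw [horth, zero_mul]
    · rw [matrixElem_of_notMem _ hwS, mul_zero]

lemma matrixElem_eq_sum (h : IsCoupling G j S D J A B) (hT : IsTensorOp G j j' S S' T) (z : ℤ)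
    {m : ℂ} (hm : m ∈ S) (M : ℂ) :
    matrixElem (T z) m M = ∑ ν ∈ D, B z m ν M * reducedElem G T (A · · ν ·) M := by
  by_cases hsupp : z < 0 ∨ (G : ℤ) < z ∨ M ≠ m + mucz G z
  · have helem : matrixElem (T z) m M = 0 := by
      rcases or_assoc.mpr hsupp with hz | hM
      · rw [hT.1 z hz, matrixElem_zero]
      · exact hT.matrixElem_of_ne hM
    rw [helem, Finset.sum_eq_zero fun ν _ => by rw [h.B_eq_zero z m ν M hsupp, zero_mul]]
  · push Not at hsupp
    exact h.matrixElem_eq_sum_of_weight hsupp.1 hsupp.2.1 hm hsupp.2.2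

end IsCoupling

theorem wigner_eckart_sl2R_general {ι : Type*} {G : ℕ} {j j' : ℂ} {S S' : Set ℂ}
    (hS : IsShiftStable S 1 (Cp j)) (hS' : IsShiftStable S' 1 (Cp j')) (hlink : IsLinked j' S')
    {T : ℤ → (RepSp S →ₗ[ℂ] RepSp S')} (hT : IsTensorOp G j j' S S' T)
    {D : Finset ι} {J : ι → ℂ} {A B : ℤ → ℂ → ι → ℂ → ℂ} (hAB : IsCoupling G j S D J A B)
    (hinj : Set.InjOn J D) (hcas : ∀ ν ∈ D, J ν ≠ j' → J ν * (J ν + 1) ≠ j' * (j' + 1)) :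
    ∃ c : ℂ,
      (∀ ν ∈ D, J ν = j' → ∀ (z : ℤ) (m m' : ℂ) (hm : m ∈ S) (hm' : m' ∈ S'),
        T z (Finsupp.single ⟨m, hm⟩ 1) ⟨m', hm'⟩ = c * B z m ν m') ∧
      ((∀ ν ∈ D, J ν ≠ j') → ∀ z : ℤ, T z = 0) := by
  have hzero (ν : ι) (hν : ν ∈ D) (hJ : J ν ≠ j') (M : ℂ) : reducedElem G T (A · · ν ·) M = 0 :=
    hAB.reducedElem_eq_zero hS hS' hT hν (hcas ν hν hJ) M
  by_cases hex : ∃ ν₀ ∈ D, J ν₀ = j'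
  · obtain ⟨ν₀, hν₀, hJ₀⟩ := hex
    obtain ⟨c, hc⟩ := hAB.exists_reducedElem_eq hS hS' hlink hT hν₀ hJ₀
    refine ⟨c, fun ν hν hJ z m m' hm hm' => ?_, fun hne => absurd hJ₀ (hne ν₀ hν₀)⟩
    obtain rfl : ν = ν₀ := hinj hν hν₀ (hJ.trans hJ₀.symm)
    have hother (ν' : ι) (hν' : ν' ∈ D) (hne : ν' ≠ ν) :
        B z m ν' m' * reducedElem G T (A · · ν' ·) m' = 0 := by
      rw [hzero ν' hν' fun hJ' => hne (hinj hν' hν (hJ'.trans hJ.symm)), mul_zero]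
    rw [← matrixElem_of_mem (T z) hm hm', hAB.matrixElem_eq_sum hT z hm,
      Finset.sum_eq_single_of_mem ν hν hother, hc m' hm', mul_comm]
  · have hne : ∀ ν ∈ D, J ν ≠ j' := fun ν hν hJ => hex ⟨ν, hν, hJ⟩
    refine ⟨0, fun ν hν hJ => absurd hJ (hne ν hν), fun _ z => ?_⟩
    refine eq_zero_of_matrixElem_eq_zero fun m hm M _ => ?_
    rw [hAB.matrixElem_eq_sum hT z hm]
    exact Finset.sum_eq_zero fun ν hν => by rw [hzero ν hν (hne ν hν), mul_zero]

/-- **Wigner–Eckart theorem for sl(2,ℝ).**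
Given standard-basis representations ρ_j, ρ_{j'}, a rank-γ tensor operator T from V_j to
V_{j'}, and Clebsch–Gordan data (D(γ,j), weight sets M_J, coefficients A and B satisfying
the vanishing, orthogonality and recursion relations) for the coupling F_γ ⊗ ρ_j such that
the values J(J+1), J ∈ D(γ,j), are pairwise distinct, J(J+1) ≠ j'(j'+1) for J ∈ D(γ,j) with
J ≠ j', and M_J = M_{j'} when J = j' ∈ D(γ,j), there is a reduced matrix element c ∈ ℂ with
⟨j',m'| T_μ |j,m⟩ = c · B(j',m'|γ,μ;j,m), the latter read as 0 when j' ∉ D(γ,j); in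
particular T_μ = 0 for all μ if j' ∉ D(γ,j). -/
theorem wigner_eckart_sl2R (G : ℕ) (hG : 1 ≤ G) (j j' : ℂ) (S S' : Set ℂ)
    (hS : IsStdWeightSet j S) (hS' : IsStdWeightSet j' S')
    (T : ℤ → (RepSp S →ₗ[ℂ] RepSp S')) (hT : IsTensorOp G j j' S S' T)
    (D : Finset (Fin (G + 1))) (MJ : Fin (G + 1) → Set ℂ)
    (hMJ : ∀ ν ∈ D, IsStdWeightSet (jlab G j ν) (MJ ν))
    (A B : ℤ → ℂ → Fin (G + 1) → ℂ → ℂ)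
    (hA0 : ∀ (z : ℤ) (m : ℂ) (ν : Fin (G + 1)) (M : ℂ),
      (z < 0 ∨ (G : ℤ) < z ∨ m ∉ S ∨ ν ∉ D ∨ M ∉ MJ ν ∨ M ≠ m + mucz G z) →
        A z m ν M = 0)
    (hB0 : ∀ (z : ℤ) (m : ℂ) (ν : Fin (G + 1)) (M : ℂ),
      (z < 0 ∨ (G : ℤ) < z ∨ m ∉ S ∨ ν ∉ D ∨ M ∉ MJ ν ∨ M ≠ m + mucz G z) →
        B z m ν M = 0)
    (horth1diag : ∀ (z : ℤ) (m : ℂ), 0 ≤ z → z ≤ (G : ℤ) → m ∈ S →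
      (∑ ν ∈ D, A z m ν (m + mucz G z) * B z m ν (m + mucz G z)) = 1)
    (horth1off : ∀ (z z' : ℤ) (m m' : ℂ), 0 ≤ z → z ≤ (G : ℤ) → 0 ≤ z' → z' ≤ (G : ℤ) →
      m ∈ S → m' ∈ S → (z ≠ z' ∨ m ≠ m') →
      (∑ ν ∈ D, A z m ν (m + mucz G z) * B z' m' ν (m + mucz G z)) = 0)
    (horth2diag : ∀ ν ∈ D, ∀ M ∈ MJ ν,
      (∑ z ∈ Finset.range (G + 1),
        B (z : ℤ) (M - mucz G z) ν M * A (z : ℤ) (M - mucz G z) ν M) = 1)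
    (horth2off : ∀ ν ∈ D, ∀ ν' ∈ D, ∀ M ∈ MJ ν, ∀ M' ∈ MJ ν', (ν ≠ ν' ∨ M ≠ M') →
      (∑ z ∈ Finset.range (G + 1),
        B (z : ℤ) (M - mucz G z) ν M * A (z : ℤ) (M - mucz G z) ν' M') = 0)
    (hrecp : ∀ ν ∈ D, ∀ (z : ℤ) (m M : ℂ),
      Cp (jlab G j ν) M * A z m ν (M + 1) =
        Cp ((G : ℂ) / 2) (mucz G (z - 1)) * A (z - 1) m ν M +
          Cp j (m - 1) * A z (m - 1) ν M)
    (hrecm : ∀ ν ∈ D, ∀ (z : ℤ) (m M : ℂ),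
      Cm (jlab G j ν) M * A z m ν (M - 1) =
        Cm ((G : ℂ) / 2) (mucz G (z + 1)) * A (z + 1) m ν M +
          Cm j (m + 1) * A z (m + 1) ν M)
    (hdist : ∀ ν ∈ D, ∀ ν' ∈ D,
      jlab G j ν * (jlab G j ν + 1) = jlab G j ν' * (jlab G j ν' + 1) → ν = ν')
    (hdist' : ∀ ν ∈ D, jlab G j ν ≠ j' →
      jlab G j ν * (jlab G j ν + 1) ≠ j' * (j' + 1))
    (hMeq : ∀ ν ∈ D, jlab G j ν = j' → MJ ν = S') :
    ∃ c : ℂ,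
      (∀ ν' : Fin (G + 1), ν' ∈ D → jlab G j ν' = j' →
        ∀ (z : ℤ) (m m' : ℂ) (hm : m ∈ S) (hm' : m' ∈ S'),
          (T z (Finsupp.single (⟨m, hm⟩ : ↥S) 1)) (⟨m', hm'⟩ : ↥S') =
            c * B z m ν' m') ∧
      ((∀ ν' ∈ D, jlab G j ν' ≠ j') →
        ∀ (z : ℤ) (m m' : ℂ) (hm : m ∈ S) (hm' : m' ∈ S'),
          (T z (Finsupp.single (⟨m, hm⟩ : ↥S) 1)) (⟨m', hm'⟩ : ↥S') = 0) ∧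
      ((∀ ν' ∈ D, jlab G j ν' ≠ j') → ∀ z : ℤ, T z = 0) := by
  obtain ⟨c, hc, hzero⟩ := wigner_eckart_sl2R_general hS.isShiftStable hS'.isShiftStable
    hS'.isLinked hT (J := jlab G j) ⟨fun z m ν M h => hA0 z m ν M (by tauto),
      fun z m ν M h => hB0 z m ν M (by tauto), horth1diag, horth1off, hrecp, hrecm⟩
    (fun ν hν ν' hν' h => hdist ν hν ν' hν' (by rw [h])) hdist'
  exact ⟨c, hc, fun hne z m m' _ _ => by simp [hzero hne z], hzero⟩

end
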